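/- arXiv:1301.6968 — 8 statements merged into one kernel-verified Lean document; each statement's English description precedes it below -/
import Mathlib

section
/- Let 𝒜 be an abelian category, let A and B be simple objects of 𝒜, let r be a natural number, and let E be an object fitting into a short exact sequence 0 → A → E → B^{⊕r} → 0 such that every morphism B → E is zero. Then every quotient of E other than E itself is a direct sum of copies of B: for every epimorphism q : E → N which is not an isomorphism, there is a natural number r' ≤ r with N ≅ B^{⊕r'}. -/
open CategoryTheory CategoryTheory.Limits

attribute [local instance] CategoryTheory.Abelian.hasFiniteBiproducts

/-!
If `f ≫ q = 0`, then `q` factors through `⨁ B`, and a quotient of a finite direct sum of simple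
objects is a subsum. Otherwise `f ≫ q` is mono because `A` is simple, so `ker q` meets `A` trivially
and embeds in `⨁ B`. By semisimplicity this subobject is a direct summand, so it vanishes as soon as
it receives no nonzero morphism from any `B i`; hence `q` is an isomorphism.
-/

lemma epi_biproduct_desc_iff {C ι : Type*} [Category C] [Preadditive C] {B : ι → C} [HasBiproduct B]
    {N : C} {f : ∀ i, B i ⟶ N} :
    Epi (biproduct.desc f) ↔ ∀ {X : C} (h : N ⟶ X), (∀ i, f i ≫ h = 0) → h = 0 := by
  constructor
  · intro _ X h hh
    exact zero_of_epi_comp (biproduct.desc f) (biproduct.hom_ext' _ _ (by simpa using hh))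
  · intro cancel
    refine Preadditive.epi_of_cancel_zero _ fun h hh => cancel h fun i => ?_
    rw [← biproduct.ι_desc_assoc f i, hh, comp_zero]

section Simple

variable {𝒜 ι : Type*} [Category 𝒜] [Abelian 𝒜] [Finite ι] {B : ι → 𝒜} [∀ i, Simple (B i)]

-- Some projection of the kernel onto a summand is nonzero, hence epi; composing the kernel relation
-- with `h` then leaves only the term at that summand.
lemma exists_comp_eq_zero_of_not_mono_biproduct_desc {N : 𝒜} {f : ∀ i, B i ⟶ N}
    (hf : ¬ Mono (biproduct.desc f)) :
    ∃ i, ∀ {X : 𝒜} (h : N ⟶ X), (∀ j ≠ i, f j ≫ h = 0) → f i ≫ h = 0 := by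
  obtain ⟨i, hi⟩ : ∃ i, kernel.ι (biproduct.desc f) ≫ biproduct.π B i ≠ 0 := by
    by_contra! hπ
    exact hf (Preadditive.mono_of_kernel_zero (biproduct.hom_ext _ _ (by simpa using hπ)))
  have : Epi (kernel.ι (biproduct.desc f) ≫ biproduct.π B i) := epi_of_nonzero_to_simple hi
  refine ⟨i, fun h hh => zero_of_epi_comp (kernel.ι (biproduct.desc f) ≫ biproduct.π B i) ?_⟩
  have desc_comp : biproduct.desc f ≫ h = biproduct.π B i ≫ f i ≫ h := by
    classical
    refine biproduct.hom_ext' _ _ fun j => ?_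
    obtain rfl | hj := eq_or_ne j i
    · simp
    · rw [biproduct.ι_desc_assoc, hh j hj, biproduct.ι_π_ne_assoc B hj, zero_comp]
  rw [Category.assoc, ← desc_comp, kernel.condition_assoc, zero_comp]

theorem exists_isIso_biproduct_desc_of_epi {N : 𝒜} (p : ⨁ B ⟶ N) [Epi p] :
    ∃ s : Set ι, IsIso (biproduct.desc fun i : s => biproduct.ι B i ≫ p) := by
  have epi_univ : Epi (biproduct.desc fun i : (Set.univ : Set ι) => biproduct.ι B i ≫ p) :=
    epi_biproduct_desc_iff.2 fun h hh => zero_of_epi_comp p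
      (biproduct.hom_ext' _ _ fun j => by simpa using hh ⟨j, Set.mem_univ j⟩)
  obtain ⟨s, epi_s, s_min⟩ := exists_minimal_of_wellFoundedLT
    (fun s : Set ι => Epi (biproduct.desc fun i : s => biproduct.ι B i ≫ p)) ⟨_, epi_univ⟩
  suffices Mono (biproduct.desc fun i : s => biproduct.ι B i ≫ p) from ⟨s, isIso_of_mono_of_epi _⟩
  by_contra not_mono
  obtain ⟨i, hi⟩ := exists_comp_eq_zero_of_not_mono_biproduct_desc not_mono
  have epi_erase : Epi (biproduct.desc fun j : ↥(s \ {i.1}) => biproduct.ι B j ≫ p) := by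
    refine epi_biproduct_desc_iff.2 fun h hh => epi_biproduct_desc_iff.1 epi_s h fun j => ?_
    have comp_zero_of_ne (j : s) (hj : j ≠ i) : (biproduct.ι B j ≫ p) ≫ h = 0 :=
      hh ⟨j, j.2, fun eq => hj (Subtype.ext eq)⟩
    obtain rfl | hj := eq_or_ne j i
    · exact hi h comp_zero_of_ne
    · exact comp_zero_of_ne j hj
  exact (s_min epi_erase Set.sdiff_subset i.2).2 rfl

lemma isSplitEpi_of_epi_biproduct_simple {N : 𝒜} (p : ⨁ B ⟶ N) [Epi p] : IsSplitEpi p := by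
  obtain ⟨s, _⟩ := exists_isIso_biproduct_desc_of_epi p
  let incl : (⨁ fun i : s => B i) ⟶ ⨁ B := biproduct.desc fun i => biproduct.ι B i
  have incl_comp : incl ≫ p = biproduct.desc fun i : s => biproduct.ι B i ≫ p := by
    ext i
    simp [incl]
  exact ⟨⟨inv (biproduct.desc fun i : s => biproduct.ι B i ≫ p) ≫ incl, by simp [incl_comp]⟩⟩

lemma isSplitMono_of_mono_biproduct_simple {K : 𝒜} (m : K ⟶ ⨁ B) [Mono m] : IsSplitMono m := by
  have := isSplitEpi_of_epi_biproduct_simple (cokernel.π m)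
  exact (ShortComplex.Splitting.ofExactOfSection _ (ShortComplex.exact_cokernel m)
    (section_ (cokernel.π m)) (by simp) ‹Mono m›).isSplitMono_f

lemma isZero_of_mono_biproduct_simple {K : 𝒜} (m : K ⟶ ⨁ B) [Mono m]
    (hK : ∀ i (φ : B i ⟶ K), φ = 0) : IsZero K := by
  have := isSplitMono_of_mono_biproduct_simple m
  have retraction_zero : retraction m = 0 := biproduct.hom_ext' _ _ fun i => by
    rw [hK i (biproduct.ι B i ≫ retraction m), comp_zero]
  rw [IsZero.iff_id_eq_zero, ← IsSplitMono.id m, retraction_zero, comp_zero]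

end Simple

lemma mono_comp_of_exact_of_mono_comp {C : Type*} [Category C] [Preadditive C] [Balanced C]
    {S : ShortComplex C} (hS : S.Exact) {K N : C} {k : K ⟶ S.X₂} {q : S.X₂ ⟶ N} [Mono k]
    [Mono (S.f ≫ q)] (w : k ≫ q = 0) : Mono (k ≫ S.g) := by
  have : Mono S.f := mono_of_mono S.f q
  refine Preadditive.mono_of_cancel_zero _ fun h hh => zero_of_comp_mono k ?_
  have lift_zero : hS.lift (h ≫ k) (by simpa using hh) = 0 :=
    zero_of_comp_mono (S.f ≫ q) (by simp [w])
  rw [← hS.lift_f (h ≫ k) (by simpa using hh), lift_zero, zero_comp]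

theorem stmt_0_general {𝒜 ι : Type*} [Category 𝒜] [Abelian 𝒜] [Finite ι]
    {A E N : 𝒜} {B : ι → 𝒜} [Simple A] [∀ i, Simple (B i)]
    {f : A ⟶ E} {g : E ⟶ ⨁ B} [Epi g] {w : f ≫ g = 0} (hfg : (ShortComplex.mk f g w).Exact)
    (hhom : ∀ i (φ : B i ⟶ E), φ = 0) (q : E ⟶ N) [Epi q] (hq : ¬ IsIso q) :
    ∃ s : Set ι, Nonempty (N ≅ ⨁ fun i : s => B i) := by
  by_cases hfq : f ≫ q = 0
  · have : Epi (hfg.desc q hfq) := epi_of_epi_fac (hfg.g_desc q hfq)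
    obtain ⟨s, _⟩ := exists_isIso_biproduct_desc_of_epi (hfg.desc q hfq)
    exact ⟨s, ⟨(asIso (biproduct.desc fun i : s => biproduct.ι B i ≫ hfg.desc q hfq)).symm⟩⟩
  · have : Mono (f ≫ q) := mono_of_nonzero_from_simple hfq
    have : Mono (kernel.ι q ≫ g) := mono_comp_of_exact_of_mono_comp hfg (kernel.condition q)
    have kernel_zero : IsZero (kernel q) := isZero_of_mono_biproduct_simple (kernel.ι q ≫ g)
      fun i φ => zero_of_comp_mono (kernel.ι q) (hhom i _)
    have : Mono q := Preadditive.mono_of_isZero_kernel q kernel_zero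
    exact absurd (isIso_of_mono_of_epi q) hq

/-- first half of Lemma 6.9 of Bayer–Macrì.
Let `𝒜` be an abelian category, `A`, `B` simple objects, and
`0 → A → E → B^{⊕r} → 0` a short exact sequence such that every morphism
`B ⟶ E` is zero. Then every quotient of `E` other than `E` itself is
isomorphic to `B^{⊕r'}` for some `r' ≤ r`. -/
theorem stmt_0 {𝒜 : Type*} [Category 𝒜] [Abelian 𝒜]
    (A B E : 𝒜) [Simple A] [Simple B] (r : ℕ)
    (f : A ⟶ E) (g : E ⟶ ⨁ fun _ : Fin r => B)
    (w : f ≫ g = 0)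
    (hse : (ShortComplex.mk f g w).ShortExact)
    (hhom : ∀ φ : B ⟶ E, φ = 0)
    (N : 𝒜) (q : E ⟶ N) (hq : Epi q) (hq' : ¬ IsIso q) :
    ∃ r' : ℕ, r' ≤ r ∧ Nonempty (N ≅ ⨁ fun _ : Fin r' => B) := by
  have := hse.epi_g
  obtain ⟨s, ⟨e⟩⟩ := stmt_0_general hse.exact (fun _ => hhom) q hq'
  have card_le : Nat.card s ≤ r := by simpa using Finite.card_subtype_le (· ∈ s)
  exact ⟨Nat.card s, card_le,
    ⟨e ≪≫ biproduct.whiskerEquiv (Finite.equivFin s) fun _ => Iso.refl B⟩⟩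
end

section
/- Let 𝒜 be an abelian category, let A and B be simple objects of 𝒜, let r be a natural number, and let E be an object fitting into a short exact sequence 0 → A^{⊕r} → E → B → 0 such that every morphism E → A is zero. Then every subobject of E other than E itself is a direct sum of copies of A: for every monomorphism N → E which is not an isomorphism, there is a natural number r' ≤ r with N ≅ A^{⊕r'}. -/
open CategoryTheory CategoryTheory.Limits

attribute [local instance] CategoryTheory.Abelian.hasFiniteBiproducts

/-!
A subobject `N` of a finite direct sum of simple objects projects isomorphically onto a partial
sum: take a partial sum onto which the projection of `N` is a monomorphism, with as few summands
as possible. Dropping one more summand creates a kernel, which has to cover that summand; hence the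
projection is also an epimorphism. In particular every such subobject is a direct summand, so a
nonzero quotient of the direct sum maps nontrivially to one of the simple objects.

Now let `N` be a subobject of an extension `E` of a simple object `B` by such a sum. If `N` maps to
zero in `B`, it lies in the sum. Otherwise `N` surjects onto `B`, so `E / N` is a quotient of the
sum; as `E`, and hence `E / N`, has no nonzero morphism to the summands, `E / N = 0`.
-/

section SimpleSummands

variable {𝒜 : Type*} [Category 𝒜] [Abelian 𝒜] {ι : Type*} [Finite ι] {S : ι → 𝒜}
  [∀ j, Simple (S j)]

theorem epi_lift_of_minimal_mono {N : 𝒜} (a : ∀ j, N ⟶ S j) {s : Set ι}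
    (hs : Minimal (fun t : Set ι ↦ Mono (biproduct.lift fun j : t ↦ a j)) s) :
    Epi (biproduct.lift fun j : s ↦ a j) := by
  classical
  set q := biproduct.lift fun j : s ↦ a j
  have : Mono q := hs.prop
  refine Preadditive.epi_of_cancel_zero _ fun {Z} h hqh ↦ biproduct.hom_ext' _ _ fun j ↦ ?_
  let κ := kernel.ι (biproduct.lift fun l : ↥(s \ {j.1}) ↦ a l)
  have κ_ne_zero : κ ≠ 0 := fun hκ ↦
    (hs.le_of_le (Abelian.mono_of_kernel_ι_eq_zero _ hκ) Set.sdiff_subset j.2).2 rfl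
  have comp_eq_zero (l : s) (hl : l ≠ j) : κ ≫ a l = 0 := by
    have hl' : l.1 ∈ s \ {j.1} := ⟨l.2, fun h ↦ hl (Subtype.ext h)⟩
    simpa only [Category.assoc, biproduct.lift_π, zero_comp] using
      kernel.condition (biproduct.lift fun l : ↥(s \ {j.1}) ↦ a l) =≫ biproduct.π _ ⟨l.1, hl'⟩
  have κ_comp_q : κ ≫ q = (κ ≫ a j) ≫ biproduct.ι (fun j : s ↦ S j) j := by
    refine biproduct.hom_ext _ _ fun l ↦ ?_
    obtain rfl | hl := eq_or_ne l j
    · simp [q]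
    · simp [q, comp_eq_zero l hl, biproduct.ι_π_ne _ hl.symm]
  have κ_comp_ne_zero : κ ≫ a j ≠ 0 := fun h ↦
    κ_ne_zero (zero_of_comp_mono q (by rw [κ_comp_q, h, zero_comp]))
  have : Epi (κ ≫ a j) := epi_of_nonzero_to_simple κ_comp_ne_zero
  rw [comp_zero]
  exact zero_of_epi_comp (κ ≫ a j) <| by
    rw [← Category.assoc, ← κ_comp_q, Category.assoc, hqh, comp_zero]

theorem exists_isIso_lift_comp_π {N : 𝒜} (k : N ⟶ ⨁ S) [Mono k] :
    ∃ s : Set ι, IsIso (biproduct.lift fun j : s ↦ k ≫ biproduct.π S j) := by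
  have mono_univ : Mono (biproduct.lift fun j : (Set.univ : Set ι) ↦ k ≫ biproduct.π S j) :=
    Preadditive.mono_of_cancel_zero _ fun h hh ↦ zero_of_comp_mono k <|
      biproduct.hom_ext _ _ fun j ↦ by
        simpa using hh =≫ biproduct.π _ ⟨j, Set.mem_univ j⟩
  obtain ⟨s, hs⟩ := exists_minimal_of_wellFoundedLT
    (fun t : Set ι ↦ Mono (biproduct.lift fun j : t ↦ k ≫ biproduct.π S j)) ⟨Set.univ, mono_univ⟩
  have := hs.prop
  have := epi_lift_of_minimal_mono (fun j ↦ k ≫ biproduct.π S j) hs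
  exact ⟨s, isIso_of_mono_of_epi _⟩

theorem isSplitMono_to_biproduct_of_simple {N : 𝒜} (k : N ⟶ ⨁ S) [Mono k] : IsSplitMono k := by
  obtain ⟨s, _⟩ := exists_isIso_lift_comp_π k
  let proj : ⨁ S ⟶ ⨁ fun j : s ↦ S j := biproduct.lift fun j ↦ biproduct.π S j
  have comp_proj : k ≫ proj = biproduct.lift fun j : s ↦ k ≫ biproduct.π S j :=
    biproduct.hom_ext _ _ fun j ↦ by simp [proj]
  have : IsIso (k ≫ proj) := by rwa [comp_proj]
  exact .mk' ⟨proj ≫ inv (k ≫ proj), by rw [← Category.assoc, IsIso.hom_inv_id]⟩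

theorem isSplitEpi_from_biproduct_of_simple {Q : 𝒜} (p : ⨁ S ⟶ Q) [Epi p] : IsSplitEpi p := by
  have := isSplitMono_to_biproduct_of_simple (kernel.ι p)
  let σ := ShortComplex.Splitting.ofExactOfRetraction
    (ShortComplex.mk (kernel.ι p) p (kernel.condition p))
    (ShortComplex.exact_kernel p) (retraction (kernel.ι p)) (IsSplitMono.id _) ‹Epi p›
  exact .mk' ⟨σ.s, σ.s_g⟩

theorem isZero_of_epi_from_biproduct_of_simple {Q : 𝒜} (p : ⨁ S ⟶ Q) [Epi p]
    (hQ : ∀ j (φ : Q ⟶ S j), φ = 0) : IsZero Q := by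
  have := isSplitEpi_from_biproduct_of_simple p
  have section_eq_zero : section_ p = 0 :=
    biproduct.hom_ext _ _ fun j ↦ by rw [hQ j (section_ p ≫ _), zero_comp]
  rw [IsZero.iff_id_eq_zero, ← IsSplitEpi.id p, section_eq_zero, zero_comp]

end SimpleSummands

theorem epi_comp_cokernel_π_of_exact {𝒜 : Type*} [Category 𝒜] [Abelian 𝒜] {X E B N : 𝒜}
    {f : X ⟶ E} {g : E ⟶ B} {w : f ≫ g = 0} (hex : (ShortComplex.mk f g w).Exact)
    (i : N ⟶ E) [Epi (i ≫ g)] : Epi (f ≫ cokernel.π i) := by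
  have : Epi g := epi_of_epi i g
  refine Preadditive.epi_of_cancel_zero _ fun {Z} h hfh ↦ ?_
  obtain ⟨d, hd⟩ : ∃ d : B ⟶ Z, g ≫ d = cokernel.π i ≫ h :=
    ⟨hex.desc _ (by simpa using hfh), hex.g_desc _ _⟩
  have hd_zero : d = 0 := zero_of_epi_comp (i ≫ g) (by simp [hd])
  exact zero_of_epi_comp (cokernel.π i) (by rw [← hd, hd_zero, comp_zero])

theorem stmt_1_general {𝒜 : Type*} [Category 𝒜] [Abelian 𝒜] {ι : Type*} [Finite ι]
    {S : ι → 𝒜} [∀ j, Simple (S j)] {B E : 𝒜} [Simple B]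
    {f : ⨁ S ⟶ E} [Mono f] {g : E ⟶ B} {w : f ≫ g = 0}
    (hex : (ShortComplex.mk f g w).Exact) (hhom : ∀ j (φ : E ⟶ S j), φ = 0)
    {N : 𝒜} (i : N ⟶ E) [Mono i] (hi : ¬ IsIso i) :
    ∃ s : Set ι, Nonempty (N ≅ ⨁ fun j : s ↦ S j) := by
  by_cases hig : i ≫ g = 0
  · obtain ⟨k, hk⟩ : ∃ k : N ⟶ ⨁ S, k ≫ f = i := ⟨hex.lift i hig, hex.lift_f i hig⟩
    have : Mono k := mono_of_mono_fac hk
    obtain ⟨s, _⟩ := exists_isIso_lift_comp_π k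
    exact ⟨s, ⟨asIso (biproduct.lift fun j : s ↦ k ≫ biproduct.π S j)⟩⟩
  · have : Epi (i ≫ g) := epi_of_nonzero_to_simple hig
    have := epi_comp_cokernel_π_of_exact hex i
    have isZero_cokernel : IsZero (cokernel i) :=
      isZero_of_epi_from_biproduct_of_simple (f ≫ cokernel.π i) fun j φ ↦
        zero_of_epi_comp (cokernel.π i) (hhom j _)
    have : Epi i := Preadditive.epi_of_isZero_cokernel i isZero_cokernel
    exact absurd (isIso_of_mono_of_epi i) hi

/-- second half of Lemma 6.9 of Bayer–Macrì.
Let `𝒜` be an abelian category, `A`, `B` simple objects, and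
`0 → A^{⊕r} → E → B → 0` a short exact sequence such that every morphism
`E ⟶ A` is zero. Then every subobject of `E` other than `E` itself is
isomorphic to `A^{⊕r'}` for some `r' ≤ r`. -/
theorem stmt_1 {𝒜 : Type*} [Category 𝒜] [Abelian 𝒜]
    (A B E : 𝒜) [Simple A] [Simple B] (r : ℕ)
    (f : (⨁ fun _ : Fin r => A) ⟶ E) (g : E ⟶ B)
    (w : f ≫ g = 0)
    (hse : (ShortComplex.mk f g w).ShortExact)
    (hhom : ∀ φ : E ⟶ A, φ = 0)
    (N : 𝒜) (i : N ⟶ E) (hi : Mono i) (hi' : ¬ IsIso i) :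
    ∃ r' : ℕ, r' ≤ r ∧ Nonempty (N ≅ ⨁ fun _ : Fin r' => A) := by
  have := hse.mono_f
  obtain ⟨s, ⟨e⟩⟩ := stmt_1_general hse.exact (fun _ ↦ hhom) i hi'
  exact ⟨Nat.card s, by simpa using Finite.card_subtype_le (· ∈ s),
    ⟨e ≪≫ biproduct.whiskerEquiv (Finite.equivFin s) fun _ ↦ Iso.refl A⟩⟩
end

section
/- Let 𝒜 be an abelian category and S an object of 𝒜 which is Noetherian, i.e. every ascending chain of subobjects of S stabilizes. Let T be a subobject of S such that T is a simple object. Then there exists a subobject T̃ of S with the following two properties: (a) T̃ admits a finite filtration 0 = T₀ ⊆ T₁ ⊆ ⋯ ⊆ T_k = T̃ by subobjects, with k ≥ 1, whose successive quotients T_i/T_{i−1} are all isomorphic to T (so T̃ is an iterated self-extension of T); and (b) every morphism T → S/T̃ is zero. -/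
open CategoryTheory CategoryTheory.Limits

/-!
Let `P ⊆ S` and let `ψ : T ⟶ S/P` be a monomorphism. The preimage `Q` of its image under `S ⟶ S/P`
contains `P`, and `Q/P ≅ T`. If `T` is nonzero, such an enlargement is strict, so when `S` is
Noetherian, enlarging repeatedly from `0` stops at a subobject whose quotient receives no
monomorphism from `T`. If `T` is simple, every nonzero morphism from `T` is a monomorphism.
-/

theorem exists_relSeries_head_eq_forall_last_not_rel {α : Type*} {r : SetRel α α}
    (hr : r.inv.IsWellFounded) (a : α) :
    ∃ p : RelSeries r, p.head = a ∧ ∀ b, (p.last, b) ∉ r := by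
  induction a using hr.induction with
  | _ a ih =>
    by_cases ha : ∃ b, (a, b) ∈ r
    · obtain ⟨b, hab⟩ := ha
      obtain ⟨p, rfl, hp⟩ := ih b hab
      exact ⟨p.cons a hab, p.head_cons a hab, by rwa [p.last_cons a hab]⟩
    · exact ⟨RelSeries.singleton r a, rfl, not_exists.mp ha⟩

section HasZeroMorphisms

variable {C : Type*} [Category C] [HasZeroMorphisms C]

/-- In a pullback square with projections `p : Q ⟶ R` and `q : Q ⟶ S`, a lift `i` to `Q` of a
kernel `j` of `f : S ⟶ A` is a kernel of `p`, the base change of `f`. -/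
noncomputable def isLimitKernelForkOfIsPullback {A P Q R S : C} {p : Q ⟶ R} {q : Q ⟶ S}
    {g : R ⟶ A} {f : S ⟶ A} (sq : IsPullback p q g f) {i : P ⟶ Q} {j : P ⟶ S} (hij : i ≫ q = j)
    (hp : i ≫ p = 0) {hf : j ≫ f = 0} (hj : IsLimit (KernelFork.ofι j hf)) :
    IsLimit (KernelFork.ofι i hp) :=
  have : Mono j := mono_of_isLimit_fork hj
  have : Mono i := mono_of_mono_fac hij
  KernelFork.IsLimit.ofι' i hp fun k hk =>
    have hkf : (k ≫ q) ≫ f = 0 := by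
      rw [Category.assoc, ← sq.w, reassoc_of% hk, zero_comp]
    let ⟨l, (hl : l ≫ j = k ≫ q)⟩ := KernelFork.IsLimit.lift' hj (k ≫ q) hkf
    ⟨l, sq.hom_ext (by rw [Category.assoc, hp, comp_zero, hk]) (by rw [Category.assoc, hij, hl])⟩

theorem le_pullback_of_arrow_comp_eq_zero [HasPullbacks C] {S A : C} {P : Subobject S} {f : S ⟶ A}
    (hf : P.arrow ≫ f = 0) (R : Subobject A) : P ≤ (Subobject.pullback f).obj R :=
  have sq := Subobject.isPullback f R
  Subobject.le_of_comm (sq.lift 0 P.arrow (by rw [hf, zero_comp])) (sq.lift_snd _ _ _)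

theorem isIso_cokernel_π_bot_arrow [HasCokernels C] [HasZeroObject C] (S : C) :
    IsIso (cokernel.π (⊥ : Subobject S).arrow) := by
  rw [Subobject.bot_arrow]
  infer_instance

section SubquotientRel

variable [HasCokernels C]

/-- The relation on subobjects of `S` that holds between `P` and `Q` when `P ≤ Q` and `Q/P ≅ T`.
A `RelSeries` for it starting at `⊥` is a filtration of its last term whose successive quotients
are all isomorphic to `T`. -/
def subquotientRel (S T : C) : SetRel (Subobject S) (Subobject S) :=
  {(P, Q) | ∃ h : P ≤ Q, Nonempty (cokernel (Subobject.ofLE P Q h) ≅ T)}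

variable {S T : C}

theorem lt_of_mem_subquotientRel [HasZeroObject C] (hT : ¬ IsZero T) {P Q : Subobject S}
    (hPQ : (P, Q) ∈ subquotientRel S T) : P < Q := by
  obtain ⟨h, ⟨e⟩⟩ := hPQ
  refine h.lt_of_ne ?_
  rintro rfl
  have : Epi (Subobject.ofLE P P h) := by
    rw [Subobject.ofLE_refl]
    infer_instance
  exact hT ((isZero_cokernel_of_epi _).of_iso e.symm)

theorem isWellFounded_inv_subquotientRel [HasZeroObject C] [IsNoetherianObject S]
    (hT : ¬ IsZero T) : (subquotientRel S T).inv.IsWellFounded :=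
  Subrelation.wf (lt_of_mem_subquotientRel hT) wellFounded_gt

end SubquotientRel

end HasZeroMorphisms

section Abelian

variable {C : Type*} [Category C] [Abelian C]

/-- If `P` is the kernel of an epimorphism `f : S ⟶ A`, then the preimage in `S` of a subobject `R`
of `A` has quotient `R` by `P`. -/
noncomputable def cokernelOfLEPullbackIso {S A : C} {P : Subobject S} {f : S ⟶ A} [Epi f]
    {hf : P.arrow ≫ f = 0} (hP : IsLimit (KernelFork.ofι P.arrow hf)) (R : Subobject A) :
    cokernel (Subobject.ofLE P _ (le_pullback_of_arrow_comp_eq_zero hf R)) ≅ (R : C) :=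
  have h := le_pullback_of_arrow_comp_eq_zero hf R
  have sq := Subobject.isPullback f R
  have : Epi (Subobject.pullbackπ f R) := Abelian.epi_fst_of_isLimit _ _ sq.isLimit
  have comp_pullbackπ : Subobject.ofLE P _ h ≫ Subobject.pullbackπ f R = 0 := by
    rw [← cancel_mono R.arrow, Category.assoc, sq.w, Subobject.ofLE_arrow_assoc, hf, zero_comp]
  (cokernelIsCokernel _).coconePointUniqueUpToIso
    (Abelian.epiIsCokernelOfKernel _
      (isLimitKernelForkOfIsPullback sq (Subobject.ofLE_arrow h) comp_pullbackπ hP))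

theorem exists_mem_subquotientRel_of_mono {S T : C} (P : Subobject S)
    (ψ : T ⟶ cokernel P.arrow) [Mono ψ] : ∃ Q, (P, Q) ∈ subquotientRel S T :=
  let hP : IsLimit (KernelFork.ofι P.arrow (cokernel.condition P.arrow)) :=
    Abelian.monoIsKernelOfCokernel _ (colimit.isColimit _)
  ⟨_, le_pullback_of_arrow_comp_eq_zero (cokernel.condition P.arrow) _,
    ⟨cokernelOfLEPullbackIso hP (Subobject.mk ψ) ≪≫ Subobject.underlyingIso ψ⟩⟩

theorem exists_relSeries_subquotientRel_forall_not_mono {S T : C} [IsNoetherianObject S]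
    (hT : ¬ IsZero T) :
    ∃ p : RelSeries (subquotientRel S T),
      p.head = ⊥ ∧ ∀ ψ : T ⟶ cokernel p.last.arrow, ¬ Mono ψ := by
  obtain ⟨p, hp, hmax⟩ :=
    exists_relSeries_head_eq_forall_last_not_rel (isWellFounded_inv_subquotientRel (S := S) hT) ⊥
  refine ⟨p, hp, fun ψ hψ => ?_⟩
  obtain ⟨Q, hQ⟩ := exists_mem_subquotientRel_of_mono p.last ψ
  exact hmax Q hQ

end Abelian

/-- from the proof of Lemma 5.8 of Bayer–Macrì.
Let `𝒜` be an abelian category and `S` a Noetherian object (every ascending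
chain of subobjects of `S` stabilizes). Let `T` be a simple subobject of `S`.
Then there is a subobject `T̃ ⊆ S` which is an iterated self-extension of `T`
(it has a finite filtration, of length at least one, starting at `0`, whose
successive quotients are isomorphic to `T`) and such that every morphism
`T ⟶ S/T̃` is zero. -/
theorem stmt_2 {𝒜 : Type*} [Category 𝒜] [Abelian 𝒜]
    (S T : 𝒜) [Simple T]
    (hNoeth : ∀ c : ℕ →o Subobject S, ∃ n : ℕ, ∀ m : ℕ, n ≤ m → c m = c n)
    (ι : T ⟶ S) (hι : Mono ι) :
    ∃ (k : ℕ) (_ : 1 ≤ k) (F : Fin (k + 1) → 𝒜)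
      (φ : ∀ i : Fin k, F i.castSucc ⟶ F i.succ)
      (j : F (Fin.last k) ⟶ S),
      Mono j ∧
      IsZero (F 0) ∧
      (∀ i : Fin k, Mono (φ i)) ∧
      (∀ i : Fin k, Nonempty (cokernel (φ i) ≅ T)) ∧
      (∀ ψ : T ⟶ cokernel j, ψ = 0) := by
  have : IsNoetherianObject S := (isNoetherianObject_iff_monotone_chain_condition S).2
    fun c => (hNoeth c).imp fun n hn m hm => (hn m hm).symm
  obtain ⟨p, head_eq, hmono⟩ :=
    exists_relSeries_subquotientRel_forall_not_mono (S := S) (Simple.not_isZero T)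
  have length_ne_zero : p.length ≠ 0 := fun h0 => by
    have last_eq : p.last = ⊥ :=
      (p.subsingleton_of_length_eq_zero h0 p.last_mem p.head_mem).trans head_eq
    have := isIso_cokernel_π_bot_arrow S
    rw [last_eq] at hmono
    exact hmono (ι ≫ cokernel.π _) (mono_comp _ _)
  refine ⟨p.length, Nat.one_le_iff_ne_zero.2 length_ne_zero, fun i => (p i : 𝒜),
    fun i => Subobject.ofLE _ _ (p.step i).1, p.last.arrow, inferInstanceAs (Mono p.last.arrow), ?_,
    fun i => inferInstanceAs (Mono (Subobject.ofLE _ _ (p.step i).1)), fun i => (p.step i).2,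
    fun ψ => ?_⟩
  · change IsZero (p.head : 𝒜)
    rw [head_eq]
    exact (isZero_zero 𝒜).of_iso Subobject.botCoeIsoZero
  · by_contra hψ
    exact hmono ψ (mono_of_nonzero_from_simple hψ)
end

section
/- Let B be an integer-valued symmetric bilinear form on ℤ² such that B(u,u) is even for every u ∈ ℤ² and the determinant of the Gram matrix of B in the standard basis is negative (i.e. ℤ² is a rank-two even lattice of signature (1,−1)). Let v ∈ ℤ² satisfy B(v,v) > 0. Let l ≥ 2 and let a₁, …, a_l ∈ ℤ² be pairwise linearly independent vectors satisfying B(aᵢ,aᵢ) > 0 and B(v,aᵢ) > 0 for every i. Then, with a = a₁ + ⋯ + a_l, one has ∑_{i=1}^{l} (B(aᵢ,aᵢ) + 2) < B(a,a). -/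
/-! Inside the plane spanned by two classes `x`, `y` with `B v x, B v y > 0`, the vector
`B v y • x - B v x • y` is orthogonal to `v`, so in signature `(1, n)` its square is negative:
`(B v y)² B x x + (B v x)² B y y < 2 (B v x) (B v y) (B x y)`. If `B x x, B y y ≥ 0`, then
`B x y > 0`, and AM-GM on the left gives the reversed Cauchy–Schwarz inequality
`B x x * B y y < (B x y)²`. For an even lattice `B x x, B y y ≥ 2`, hence `B x y > 2`, and each
diagonal term of the expansion of `B a a` is accompanied by at least one such off-diagonal term. -/

open LinearMap (BilinForm)

section OrderedRing

variable {R M : Type*} [CommRing R] [LinearOrder R] [IsStrictOrderedRing R]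
  [AddCommGroup M] [Module R M] {B : BilinForm R M} {v x y : M}

/-- `B` is negative definite on the orthogonal complement of `v`. For `B v v > 0` and `B` symmetric
this expresses that `B` has signature `(1, n)`, without reference to a basis or to the rank. -/
def IsNegDefOrthogonal (B : BilinForm R M) (v : M) : Prop :=
  ∀ u, B v u = 0 → u ≠ 0 → B u u < 0

namespace IsNegDefOrthogonal

theorem sq_mul_add_sq_mul_lt (hv : IsNegDefOrthogonal B v) (hB : B.IsSymm)
    (hxy : LinearIndependent R ![x, y]) (hvx : B v x ≠ 0) :
    B v y ^ 2 * B x x + B v x ^ 2 * B y y < 2 * (B v x * B v y) * B x y := by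
  set w := B v y • x - B v x • y with hw
  have hvw : B v w = 0 := by
    simp only [hw, map_sub, map_smul, smul_eq_mul]
    ring
  have hw_ne : w ≠ 0 := fun h =>
    hvx (neg_eq_zero.mp (LinearIndependent.pair_iff.mp hxy (B v y) (-B v x)
      (by rw [neg_smul, ← sub_eq_add_neg, ← hw, h])).2)
  have hww : B w w = B v y ^ 2 * B x x + B v x ^ 2 * B y y - 2 * (B v x * B v y) * B x y := by
    simp only [hw, map_sub, map_smul, LinearMap.sub_apply, LinearMap.smul_apply, smul_eq_mul,
      hB.eq y x]
    ring
  exact sub_neg.mp (hww ▸ hv w hvw hw_ne)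

theorem apply_pos (hv : IsNegDefOrthogonal B v) (hB : B.IsSymm)
    (hxy : LinearIndependent R ![x, y]) (hx : 0 ≤ B x x) (hy : 0 ≤ B y y)
    (hvx : 0 < B v x) (hvy : 0 < B v y) : 0 < B x y := by
  have h : 0 < 2 * (B v x * B v y) * B x y :=
    lt_of_le_of_lt (by positivity) (hv.sq_mul_add_sq_mul_lt hB hxy hvx.ne')
  exact pos_of_mul_pos_right h (by positivity)

theorem apply_self_mul_apply_self_lt_sq (hv : IsNegDefOrthogonal B v) (hB : B.IsSymm)
    (hxy : LinearIndependent R ![x, y]) (hx : 0 ≤ B x x) (hy : 0 ≤ B y y) (hvx : B v x ≠ 0) :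
    B x x * B y y < B x y ^ 2 := by
  have h : (2 * (B v x * B v y)) ^ 2 * (B x x * B y y) <
      (2 * (B v x * B v y)) ^ 2 * B x y ^ 2 :=
    calc (2 * (B v x * B v y)) ^ 2 * (B x x * B y y)
        = 4 * (B v y ^ 2 * B x x) * (B v x ^ 2 * B y y) := by ring
      _ ≤ (B v y ^ 2 * B x x + B v x ^ 2 * B y y) ^ 2 := four_mul_le_sq_add _ _
      _ < (2 * (B v x * B v y) * B x y) ^ 2 :=
        pow_lt_pow_left₀ (hv.sq_mul_add_sq_mul_lt hB hxy hvx) (by positivity) two_ne_zero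
      _ = (2 * (B v x * B v y)) ^ 2 * B x y ^ 2 := mul_pow _ _ _
  exact lt_of_mul_lt_mul_left h (sq_nonneg _)

end IsNegDefOrthogonal

theorem sum_apply_self_add_lt_apply_sum {ι : Type*} [Fintype ι] [Nontrivial ι] {a : ι → M} {c : R}
    (hc : 0 ≤ c) (ha : ∀ i j, i ≠ j → c < B (a i) (a j)) :
    ∑ i, (B (a i) (a i) + c) < B (∑ i, a i) (∑ i, a i) := by
  classical
  have hrow : ∀ i, B (a i) (a i) + c < ∑ j, B (a i) (a j) := by
    intro i
    obtain ⟨k, hk⟩ := exists_ne i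
    have hik : B (a i) (a k) ≤ ∑ j ∈ Finset.univ.erase i, B (a i) (a j) :=
      Finset.single_le_sum (f := fun j => B (a i) (a j))
        (fun j hj => hc.trans (ha i j (Finset.ne_of_mem_erase hj).symm).le)
        (Finset.mem_erase.mpr ⟨hk, Finset.mem_univ k⟩)
    rw [← Finset.add_sum_erase _ _ (Finset.mem_univ i)]
    exact add_lt_add_right ((ha i k hk.symm).trans_le hik) _
  calc ∑ i, (B (a i) (a i) + c)
      < ∑ i, ∑ j, B (a i) (a j) :=
        Finset.sum_lt_sum_of_nonempty Finset.univ_nonempty fun i _ => hrow i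
    _ = B (∑ i, a i) (∑ i, a i) := by simp_rw [LinearMap.map_sum₂, map_sum]

end OrderedRing

section RankTwo

variable {R M : Type*} [CommRing R] [AddCommGroup M] [Module R M] {B : BilinForm R M}

theorem apply_self_mul_apply_self_sub_sq_eq_det_mul_sq (hB : B.IsSymm)
    (b : Module.Basis (Fin 2) R M) (v u : M) :
    B v v * B u u - B v u ^ 2 =
      (LinearMap.BilinForm.toMatrix b B).det *
        (b.repr v 0 * b.repr u 1 - b.repr v 1 * b.repr u 0) ^ 2 := by
  have apply_eq (x y : M) : B x y = b.repr x 0 * b.repr y 0 * B (b 0) (b 0) +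
      (b.repr x 0 * b.repr y 1 + b.repr x 1 * b.repr y 0) * B (b 0) (b 1) +
      b.repr x 1 * b.repr y 1 * B (b 1) (b 1) := by
    conv_lhs => rw [← b.sum_repr x, ← b.sum_repr y]
    simp only [Fin.sum_univ_two, map_add, map_smul, LinearMap.add_apply, LinearMap.smul_apply,
      smul_eq_mul, hB.eq (b 1) (b 0)]
    ring
  simp only [Matrix.det_fin_two, LinearMap.BilinForm.toMatrix_apply, hB.eq (b 1) (b 0),
    apply_eq v v, apply_eq u u, apply_eq v u]
  ring

variable [LinearOrder R] [IsStrictOrderedRing R]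

theorem isNegDefOrthogonal_of_det_neg (hB : B.IsSymm) (b : Module.Basis (Fin 2) R M)
    (hdet : (LinearMap.BilinForm.toMatrix b B).det < 0) {v : M} (hv : 0 < B v v) :
    IsNegDefOrthogonal B v := by
  intro u hvu hu
  have hwedge : b.repr v 0 * b.repr u 1 - b.repr v 1 * b.repr u 0 ≠ 0 := by
    intro h
    have hcross : ∀ i j, b.repr v i * b.repr u j = b.repr u i * b.repr v j := by
      simp only [Fin.forall_fin_two]
      exact ⟨⟨mul_comm _ _, by linear_combination h⟩, by linear_combination -h, mul_comm _ _⟩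
    have hsmul (i : Fin 2) : b.repr v i • u = b.repr u i • v :=
      b.ext_elem fun j => by simpa using hcross i j
    refine hu (b.ext_elem fun i => ?_)
    have hmul : b.repr u i * B v v = 0 := by
      simpa [hvu] using (congrArg (B v) (hsmul i)).symm
    simpa using (mul_eq_zero.mp hmul).resolve_right hv.ne'
  have hgram : B v v * B u u < 0 := by
    have h := apply_self_mul_apply_self_sub_sq_eq_det_mul_sq hB b v u
    rw [hvu, zero_pow two_ne_zero, sub_zero] at h
    exact h ▸ mul_neg_of_neg_of_pos hdet (sq_pos_of_ne_zero hwedge)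
  exact neg_of_mul_neg_right hgram hv.le

end RankTwo

section EvenLattice

variable {M : Type*} [AddCommGroup M] {B : BilinForm ℤ M} {v : M}

theorem IsNegDefOrthogonal.two_lt_apply (hv : IsNegDefOrthogonal B v) (hB : B.IsSymm)
    (heven : ∀ u, Even (B u u)) {x y : M} (hxy : LinearIndependent ℤ ![x, y])
    (hx : 0 < B x x) (hy : 0 < B y y) (hvx : 0 < B v x) (hvy : 0 < B v y) : 2 < B x y := by
  have two_le {u : M} (hu : 0 < B u u) : 2 ≤ B u u := Int.le_of_dvd hu (heven u).two_dvd
  refine lt_of_pow_lt_pow_left₀ 2 (hv.apply_pos hB hxy hx.le hy.le hvx hvy).le ?_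
  calc (2 : ℤ) ^ 2 = 2 * 2 := sq 2
    _ ≤ B x x * B y y := mul_le_mul (two_le hx) (two_le hy) zero_le_two hx.le
    _ < B x y ^ 2 := hv.apply_self_mul_apply_self_lt_sq hB hxy hx.le hy.le hvx.ne'

theorem stmt_3_general (hv : IsNegDefOrthogonal B v) (hB : B.IsSymm) (heven : ∀ u, Even (B u u))
    {ι : Type*} [Fintype ι] [Nontrivial ι] {a : ι → M}
    (hindep : ∀ i j, i ≠ j → LinearIndependent ℤ ![a i, a j])
    (hpos : ∀ i, 0 < B (a i) (a i)) (hva : ∀ i, 0 < B v (a i)) :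
    ∑ i, (B (a i) (a i) + 2) < B (∑ i, a i) (∑ i, a i) :=
  sum_apply_self_add_lt_apply_sum zero_le_two fun i j hij =>
    hv.two_lt_apply hB heven (hindep i j hij) (hpos i) (hpos j) (hva i) (hva j)

end EvenLattice

theorem det_toMatrix_finTwoProd {R : Type*} [CommRing R] (B : BilinForm R (R × R)) :
    (LinearMap.BilinForm.toMatrix (Module.Basis.finTwoProd R) B).det = Matrix.det
      !![B (1, 0) (1, 0), B (1, 0) (0, 1); B (0, 1) (1, 0), B (0, 1) (0, 1)] := by
  simp [Matrix.det_fin_two, LinearMap.BilinForm.toMatrix_apply]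

/-- Lemma 6.4 of Bayer–Macrì.
Let `B` be an even integral symmetric bilinear form on `ℤ²` of signature
`(1,−1)` (negative Gram determinant in the standard basis), let `v` satisfy
`B(v,v) > 0`, and let `a₁, …, a_l` (`l ≥ 2`) be pairwise linearly independent
vectors with `B(aᵢ,aᵢ) > 0` and `B(v,aᵢ) > 0`. Then
`∑ (B(aᵢ,aᵢ) + 2) < B(a,a)` where `a = a₁ + ⋯ + a_l`. -/
theorem stmt_3
    (B : (ℤ × ℤ) →ₗ[ℤ] (ℤ × ℤ) →ₗ[ℤ] ℤ)
    (hsymm : ∀ u w : ℤ × ℤ, B u w = B w u)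
    (heven : ∀ u : ℤ × ℤ, Even (B u u))
    (hdet : Matrix.det
      !![B (1, 0) (1, 0), B (1, 0) (0, 1); B (0, 1) (1, 0), B (0, 1) (0, 1)] < 0)
    (v : ℤ × ℤ) (hv : 0 < B v v)
    (l : ℕ) (hl : 2 ≤ l) (a : Fin l → ℤ × ℤ)
    (hindep : ∀ i j : Fin l, i ≠ j → LinearIndependent ℤ ![a i, a j])
    (hpos : ∀ i : Fin l, 0 < B (a i) (a i))
    (hva : ∀ i : Fin l, 0 < B v (a i)) :
    ∑ i : Fin l, (B (a i) (a i) + 2) < B (∑ i : Fin l, a i) (∑ i : Fin l, a i) := by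
  have hB : BilinForm.IsSymm B := ⟨hsymm⟩
  have hneg : IsNegDefOrthogonal B v :=
    isNegDefOrthogonal_of_det_neg hB (Module.Basis.finTwoProd ℤ)
      ((det_toMatrix_finTwoProd B).trans_lt hdet) hv
  have : Nontrivial (Fin l) := Fin.nontrivial_iff_two_le.mpr hl
  exact stmt_3_general hneg hB heven hindep hpos hva
end

section
/- Let V be a real vector space with a symmetric bilinear form B, and let s₁, s₂ ∈ V with B(s₁,s₁) = B(s₂,s₂) = −2 and B(s₁,s₂) ≥ 3. Then there is no vector s₃ lying in the span of s₁ and s₂ such that B(s₃,s₃) = −2, B(s₁,s₃) ≥ 0 and B(s₂,s₃) ≥ 0. Equivalently, writing s₃ = x·s₁ + y·s₂ with x, y ∈ ℝ and m = B(s₁,s₂) ≥ 3: if −2x + my ≥ 0 and mx − 2y ≥ 0, then −2x² + 2mxy − 2y² ≥ 0, with equality only for x = y = 0; in particular −2x² + 2mxy − 2y² ≠ −2 in that region. -/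
/-!
Let `G = !![a, b; b, c]` be the Gram matrix of two vectors. If `p` and `q` are the pairings of
`v = x s₁ + y s₂` with `s₁` and `s₂`, then `v` has square `(p, q) G⁻¹ (p, q)ᵀ`, that is
`(b² - ac) (v, v) = -c p² + 2b p q - a q²`. When `a, c < 0 ≤ b` and `G` is indefinite, every term
on the right is nonnegative for `p, q ≥ 0`, and the sum vanishes only for `p = q = 0`.
-/

section BinaryForm

variable {R : Type*} [CommRing R]

theorem neg_gram_det_mul_binary_form (a b c x y : R) :
    (b ^ 2 - a * c) * (a * x ^ 2 + 2 * b * x * y + c * y ^ 2) =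
      -c * (a * x + b * y) ^ 2 + 2 * b * ((a * x + b * y) * (b * x + c * y)) +
        -a * (b * x + c * y) ^ 2 := by
  ring

theorem eq_zero_and_eq_zero_of_gram_mul_eq_zero [NoZeroDivisors R] {a b c x y : R}
    (hdet : b ^ 2 - a * c ≠ 0) (hp : a * x + b * y = 0) (hq : b * x + c * y = 0) :
    x = 0 ∧ y = 0 := by
  have hx : (b ^ 2 - a * c) * x = 0 := by linear_combination b * hq - c * hp
  have hy : (b ^ 2 - a * c) * y = 0 := by linear_combination b * hp - a * hq
  exact ⟨(mul_eq_zero.mp hx).resolve_left hdet, (mul_eq_zero.mp hy).resolve_left hdet⟩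

variable [LinearOrder R] [IsStrictOrderedRing R] {a b c x y : R}

theorem binary_form_nonneg (ha : a ≤ 0) (hc : c ≤ 0) (hb : 0 ≤ b) (hdet : a * c < b ^ 2)
    (hp : 0 ≤ a * x + b * y) (hq : 0 ≤ b * x + c * y) :
    0 ≤ a * x ^ 2 + 2 * b * x * y + c * y ^ 2 := by
  refine nonneg_of_mul_nonneg_right ?_ (sub_pos.mpr hdet)
  rw [neg_gram_det_mul_binary_form]
  have ha' : 0 ≤ -a := neg_nonneg.mpr ha
  have hc' : 0 ≤ -c := neg_nonneg.mpr hc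
  positivity

theorem eq_zero_and_eq_zero_of_binary_form_eq_zero (ha : a < 0) (hc : c < 0) (hb : 0 ≤ b)
    (hdet : a * c < b ^ 2) (hp : 0 ≤ a * x + b * y) (hq : 0 ≤ b * x + c * y)
    (hform : a * x ^ 2 + 2 * b * x * y + c * y ^ 2 = 0) : x = 0 ∧ y = 0 := by
  have hsum := neg_gram_det_mul_binary_form a b c x y
  rw [hform, mul_zero] at hsum
  have hp_term : 0 ≤ -c * (a * x + b * y) ^ 2 := mul_nonneg (neg_nonneg.mpr hc.le) (sq_nonneg _)
  have hq_term : 0 ≤ -a * (b * x + c * y) ^ 2 := mul_nonneg (neg_nonneg.mpr ha.le) (sq_nonneg _)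
  have hcross : 0 ≤ 2 * b * ((a * x + b * y) * (b * x + c * y)) := by positivity
  have hp_zero : -c * (a * x + b * y) ^ 2 = 0 := by linarith
  have hq_zero : -a * (b * x + c * y) ^ 2 = 0 := by linarith
  exact eq_zero_and_eq_zero_of_gram_mul_eq_zero (sub_pos.mpr hdet).ne'
    (by simpa [hc.ne] using hp_zero) (by simpa [ha.ne] using hq_zero)

end BinaryForm

section SpanPair

variable {R M : Type*} [CommRing R] [AddCommGroup M] [Module R M] (B : M →ₗ[R] M →ₗ[R] R)
  {s₁ s₂ : M}

theorem bilin_smul_add_smul_self (hsymm : B s₂ s₁ = B s₁ s₂) (x y : R) :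
    B (x • s₁ + y • s₂) (x • s₁ + y • s₂) =
      B s₁ s₁ * x ^ 2 + 2 * B s₁ s₂ * x * y + B s₂ s₂ * y ^ 2 := by
  simp only [map_add, map_smul, LinearMap.add_apply, LinearMap.smul_apply, smul_eq_mul, hsymm]
  ring

variable [LinearOrder R] [IsStrictOrderedRing R]

theorem bilin_self_nonneg_of_mem_span_pair {v : M} (hsymm : B s₂ s₁ = B s₁ s₂)
    (h₁ : B s₁ s₁ ≤ 0) (h₂ : B s₂ s₂ ≤ 0) (h₁₂ : 0 ≤ B s₁ s₂)
    (hdet : B s₁ s₁ * B s₂ s₂ < B s₁ s₂ ^ 2) (hv : v ∈ Submodule.span R {s₁, s₂})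
    (hp : 0 ≤ B s₁ v) (hq : 0 ≤ B s₂ v) : 0 ≤ B v v := by
  obtain ⟨x, y, rfl⟩ := Submodule.mem_span_pair.mp hv
  simp only [map_add, map_smul, smul_eq_mul, hsymm, mul_comm x, mul_comm y] at hp hq
  rw [bilin_smul_add_smul_self B hsymm]
  exact binary_form_nonneg h₁ h₂ h₁₂ hdet hp hq

theorem stmt_5_general (hsymm : B s₂ s₁ = B s₁ s₂)
    (h₁ : B s₁ s₁ < 0) (h₂ : B s₂ s₂ < 0) (h₁₂ : 0 ≤ B s₁ s₂)
    (hdet : B s₁ s₁ * B s₂ s₂ < B s₁ s₂ ^ 2) :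
    (¬ ∃ s₃ ∈ Submodule.span R {s₁, s₂}, B s₃ s₃ < 0 ∧ 0 ≤ B s₁ s₃ ∧ 0 ≤ B s₂ s₃) ∧
    (∀ x y : R, 0 ≤ B s₁ s₁ * x + B s₁ s₂ * y → 0 ≤ B s₁ s₂ * x + B s₂ s₂ * y →
      0 ≤ B s₁ s₁ * x ^ 2 + 2 * B s₁ s₂ * x * y + B s₂ s₂ * y ^ 2 ∧
      (B s₁ s₁ * x ^ 2 + 2 * B s₁ s₂ * x * y + B s₂ s₂ * y ^ 2 = 0 → x = 0 ∧ y = 0)) := by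
  refine ⟨?_, fun x y hp hq => ⟨binary_form_nonneg h₁.le h₂.le h₁₂ hdet hp hq,
    eq_zero_and_eq_zero_of_binary_form_eq_zero h₁ h₂ h₁₂ hdet hp hq⟩⟩
  rintro ⟨s₃, hspan, hneg, hp, hq⟩
  exact hneg.not_ge
    (bilin_self_nonneg_of_mem_span_pair B hsymm h₁.le h₂.le h₁₂ hdet hspan hp hq)

end SpanPair

/-- lattice-theoretic heart of Proposition 6.3 of
Bayer–Macrì. Let `V` be a real vector space with a symmetric bilinear form
`B`, and let `s₁, s₂` satisfy `B(s₁,s₁) = B(s₂,s₂) = −2` and `B(s₁,s₂) ≥ 3`.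
Then no vector `s₃` in the span of `s₁, s₂` has `B(s₃,s₃) = −2`,
`B(s₁,s₃) ≥ 0` and `B(s₂,s₃) ≥ 0`. Equivalently, with `m = B(s₁,s₂)`:
if `−2x + my ≥ 0` and `mx − 2y ≥ 0` then
`−2x² + 2mxy − 2y² ≥ 0`, with equality only for `x = y = 0`. -/
theorem stmt_5 {V : Type*} [AddCommGroup V] [Module ℝ V]
    (B : V →ₗ[ℝ] V →ₗ[ℝ] ℝ) (hsymm : ∀ x y : V, B x y = B y x)
    (s₁ s₂ : V) (h1 : B s₁ s₁ = -2) (h2 : B s₂ s₂ = -2) (hm : 3 ≤ B s₁ s₂) :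
    (¬ ∃ s₃ ∈ Submodule.span ℝ ({s₁, s₂} : Set V),
        B s₃ s₃ = -2 ∧ 0 ≤ B s₁ s₃ ∧ 0 ≤ B s₂ s₃) ∧
    (∀ x y : ℝ, 0 ≤ -2 * x + (B s₁ s₂) * y → 0 ≤ (B s₁ s₂) * x - 2 * y →
      0 ≤ -2 * x ^ 2 + 2 * (B s₁ s₂) * x * y - 2 * y ^ 2 ∧
      (-2 * x ^ 2 + 2 * (B s₁ s₂) * x * y - 2 * y ^ 2 = 0 → x = 0 ∧ y = 0)) := by
  obtain ⟨hspan, hform⟩ := stmt_5_general B (hsymm s₂ s₁) (by linarith) (by linarith)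
    (by linarith) (by rw [h1, h2]; nlinarith)
  refine ⟨fun ⟨s₃, hs₃, hsq, hp, hq⟩ => hspan ⟨s₃, hs₃, by linarith, hp, hq⟩, ?_⟩
  simpa only [h1, h2, neg_mul, ← sub_eq_add_neg] using hform
end

section
/- Fix an integer m ≥ 3 and equip ℤ² with the bilinear form B with Gram matrix ((−2, m),(m, −2)) in the basis s = (1,0), t = (0,1). Define the reflections ρ_s(w) = w + B(w,s)·s and ρ_t(w) = w + B(w,t)·t; these are B-preserving linear involutions of ℤ². Let G be the subgroup of linear automorphisms of ℤ² generated by ρ_s and ρ_t. Then for every v = (x,y) ∈ ℤ² with B(v,v) > 0 and x > 0, the orbit G·v contains exactly one element v₀ satisfying both B(v₀, s) ≥ 0 and B(v₀, t) ≥ 0. -/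
/-!
The height `x + y` of a vector changes by `B(u, s)` under `ρ_s` and by `B(u, t)` under `ρ_t`, so
the wanted vectors are the elements of the orbit whose height no reflection lowers. One exists
because heights are positive integers on the positive cone. It is unique because
`B(u, u) = x B(u, s) + y B(u, t)` with `x`, `y` and `B(u, u)` positive: at most one of the two
reflections lowers the height of `u`, so descent is deterministic, hence confluent. As every
reflection is a descent step, the reverse of one, or fixes the vector, two terminal vectors of the
same orbit are joinable and therefore equal.
-/

open Relation Set

section Descent

variable {α ι β : Type*} {σ : ι → α → α} {S : Set α} {h : α → β}

theorem foldl_mem_of_mapsTo (hσ : ∀ i, MapsTo (σ i) S S) {v : α} (hv : v ∈ S) (l : List ι) :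
    l.foldl (fun u i ↦ σ i u) v ∈ S :=
  l.foldlRecOn _ hv fun _ hu i _ ↦ hσ i hu

theorem exists_foldl_forall_le [LinearOrder β] (hσ : ∀ i, MapsTo (σ i) S S)
    (hwf : (h '' S).IsWF) {v : α} (hv : v ∈ S) :
    ∃ w, (∃ l : List ι, w = l.foldl (fun u i ↦ σ i u) v) ∧ ∀ i, h w ≤ h (σ i w) := by
  let heights := range fun l : List ι ↦ h (l.foldl (fun u i ↦ σ i u) v)
  have heights_subset : heights ⊆ h '' S :=
    range_subset_iff.2 fun l ↦ mem_image_of_mem h (foldl_mem_of_mapsTo hσ hv l)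
  have heights_wf : heights.IsWF := hwf.mono heights_subset
  obtain ⟨l, hl⟩ := heights_wf.min_mem (range_nonempty _)
  refine ⟨_, ⟨l, rfl⟩, fun i ↦ hl.trans_le (heights_wf.min_le _ ⟨l ++ [i], ?_⟩)⟩
  simp only [List.foldl_append, List.foldl_cons, List.foldl_nil]

/-- The relation "`w` is obtained from `u ∈ S` by one of the maps `σ i`, lowering the height `h`",
the rewriting step of the descent argument. -/
def DescentStep [LT β] (σ : ι → α → α) (S : Set α) (h : α → β) (u w : α) : Prop :=
  u ∈ S ∧ ∃ i, w = σ i u ∧ h w < h u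

theorem eq_of_reflTransGen_descentStep [Preorder β] {u w : α} (hu : ∀ i, h u ≤ h (σ i u))
    (huw : ReflTransGen (DescentStep σ S h) u w) : u = w := by
  rcases huw.cases_head with rfl | ⟨_, ⟨-, i, rfl, hi⟩, -⟩
  · rfl
  · exact absurd hi (hu i).not_gt

theorem eq_of_join_descentStep [Preorder β] {u w : α} (hu : ∀ i, h u ≤ h (σ i u))
    (hw : ∀ i, h w ≤ h (σ i w)) (huw : Join (ReflTransGen (DescentStep σ S h)) u w) : u = w := by
  obtain ⟨z, huz, hwz⟩ := huw
  rw [eq_of_reflTransGen_descentStep hu huz, eq_of_reflTransGen_descentStep hw hwz]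

/-- A height for which a family of involutions preserving `S` has deterministic descent: at each
point of `S` at most one of the involutions lowers it, and those that keep it fix the point. -/
structure IsDescentHeight [LT β] (σ : ι → α → α) (S : Set α) (h : α → β) : Prop where
  involutive (i : ι) : (σ i).Involutive
  mapsTo (i : ι) : MapsTo (σ i) S S
  apply_eq_self {u : α} (hu : u ∈ S) {i : ι} (hi : h (σ i u) = h u) : σ i u = u
  eq_of_lt {u : α} (hu : u ∈ S) {i j : ι} (hi : h (σ i u) < h u) (hj : h (σ j u) < h u) : i = j

namespace IsDescentHeight

section LT

variable [LT β]

theorem rightUnique_descentStep (H : IsDescentHeight σ S h) :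
    Relator.RightUnique (DescentStep σ S h) := by
  rintro u _ _ ⟨hu, i, rfl, hi⟩ ⟨-, j, rfl, hj⟩
  rw [H.eq_of_lt hu hi hj]

theorem equivalence_join (H : IsDescentHeight σ S h) :
    Equivalence (Join (ReflTransGen (DescentStep σ S h))) :=
  equivalence_join_reflTransGen fun _ b _ hb hc ↦
    ⟨b, .refl, H.rightUnique_descentStep hb hc ▸ .refl⟩

end LT

variable [LinearOrder β]

theorem join_apply (H : IsDescentHeight σ S h) {u : α} (hu : u ∈ S) (i : ι) :
    Join (ReflTransGen (DescentStep σ S h)) u (σ i u) := by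
  rcases lt_trichotomy (h (σ i u)) (h u) with hlt | heq | hgt
  · exact ⟨σ i u, .single ⟨hu, i, rfl, hlt⟩, .refl⟩
  · rw [H.apply_eq_self hu heq]
    exact H.equivalence_join.refl u
  · have hback : σ i (σ i u) = u := H.involutive i u
    exact ⟨u, .refl, .single ⟨H.mapsTo i hu, i, hback.symm, hgt⟩⟩

theorem join_foldl (H : IsDescentHeight σ S h) {v : α} (hv : v ∈ S) (l : List ι) :
    Join (ReflTransGen (DescentStep σ S h)) v (l.foldl (fun u i ↦ σ i u) v) := by
  induction l generalizing v with
  | nil => exact H.equivalence_join.refl v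
  | cons i l ih => exact H.equivalence_join.trans (H.join_apply hv i) (ih (H.mapsTo i hv))

theorem existsUnique_foldl_forall_le (H : IsDescentHeight σ S h) (hwf : (h '' S).IsWF) {v : α}
    (hv : v ∈ S) :
    ∃! w, (∃ l : List ι, w = l.foldl (fun u i ↦ σ i u) v) ∧ ∀ i, h w ≤ h (σ i w) := by
  refine existsUnique_of_exists_of_unique (exists_foldl_forall_le H.mapsTo hwf hv) ?_
  rintro _ _ ⟨⟨l, rfl⟩, hmin⟩ ⟨⟨l', rfl⟩, hmin'⟩
  have hjoin := H.equivalence_join.trans (H.equivalence_join.symm (H.join_foldl hv l))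
    (H.join_foldl hv l')
  exact eq_of_join_descentStep hmin hmin' hjoin

end IsDescentHeight

end Descent

section SphericalReflection

variable {R M : Type*} [CommRing R] [AddCommGroup M] [Module R M] (B : LinearMap.BilinForm R M)

/-- The reflection `w ↦ w + B(w, u) u`, for a spherical vector `u`, i.e. one with
`B(u, u) = -2`. -/
def sphericalReflection (u : M) : Module.End R M :=
  Module.preReflection u (-B.flip u)

theorem sphericalReflection_apply (u w : M) : sphericalReflection B u w = w + B w u • u := by
  simp [sphericalReflection, Module.preReflection_apply]

variable {B} {u : M}

theorem involutive_sphericalReflection (hu : B u u = -2) :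
    Function.Involutive (sphericalReflection B u) :=
  Module.involutive_preReflection (by simp [hu])

theorem apply_sphericalReflection_self (hB : B.IsSymm) (hu : B u u = -2) (w : M) :
    B (sphericalReflection B u w) (sphericalReflection B u w) = B w w := by
  simp only [sphericalReflection_apply, map_add, map_smul, LinearMap.add_apply,
    LinearMap.smul_apply, smul_eq_mul, hu, hB.eq u w]
  ring

end SphericalReflection

section HyperbolicForm

variable {R : Type*} [CommRing R] (m : R)

/-- The bilinear form on `R²` with Gram matrix `((-2, m), (m, -2))` in the standard basis,
indefinite for `m > 2`. -/
noncomputable def hyperbolicForm : LinearMap.BilinForm R (R × R) :=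
  Matrix.toBilin (Module.Basis.finTwoProd R) !![-2, m; m, -2]

theorem hyperbolicForm_apply (u w : R × R) : hyperbolicForm m u w =
    -2 * u.1 * w.1 + m * (u.1 * w.2 + u.2 * w.1) - 2 * u.2 * w.2 := by
  simp only [hyperbolicForm, Matrix.toBilin_apply, Fin.sum_univ_two, Matrix.of_apply,
    Module.Basis.coe_finTwoProd_repr, Matrix.cons_val', Matrix.cons_val_zero, Matrix.cons_val_one,
    Matrix.cons_val_fin_one]
  ring

theorem isSymm_hyperbolicForm : (hyperbolicForm m).IsSymm :=
  ⟨fun u w ↦ by simp only [hyperbolicForm_apply]; ring⟩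

/-- The two simple spherical classes: `s = (1, 0)` for `true` and `t = (0, 1)` for `false`. -/
def simpleClass : Bool → R × R
  | true => (1, 0)
  | false => (0, 1)

theorem hyperbolicForm_simpleClass_self (b : Bool) :
    hyperbolicForm m (simpleClass b) (simpleClass b) = -2 := by
  cases b <;> simp [hyperbolicForm_apply, simpleClass]

theorem hyperbolicForm_self (u : R × R) : hyperbolicForm m u u =
    u.1 * hyperbolicForm m u (simpleClass true) +
      u.2 * hyperbolicForm m u (simpleClass false) := by
  simp only [hyperbolicForm_apply, simpleClass]
  ring

/-- The reflections `ρ_s` and `ρ_t`, indexed as in `simpleClass`. -/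
noncomputable def simpleReflection (b : Bool) : Module.End R (R × R) :=
  sphericalReflection (hyperbolicForm m) (simpleClass b)

theorem simpleReflection_apply (b : Bool) (u : R × R) : simpleReflection m b u =
    u + hyperbolicForm m u (simpleClass b) • simpleClass b :=
  sphericalReflection_apply _ _ _

theorem simpleReflection_true_snd (u : R × R) : (simpleReflection m true u).2 = u.2 := by
  simp [simpleReflection_apply, simpleClass]

theorem simpleReflection_false_fst (u : R × R) : (simpleReflection m false u).1 = u.1 := by
  simp [simpleReflection_apply, simpleClass]

/-- The height of `x s + y t`, the sum of its coordinates in the simple classes. -/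
def height (u : R × R) : R := u.1 + u.2

theorem height_simpleReflection (b : Bool) (u : R × R) :
    height (simpleReflection m b u) = height u + hyperbolicForm m u (simpleClass b) := by
  rw [simpleReflection_apply]
  cases b <;> simp only [height, simpleClass, Prod.fst_add, Prod.snd_add, Prod.smul_mk,
    smul_eq_mul, mul_one, mul_zero] <;> ring

variable {m} [LinearOrder R]

theorem height_le_height_simpleReflection [IsOrderedAddMonoid R] {b : Bool} {u : R × R} :
    height u ≤ height (simpleReflection m b u) ↔ 0 ≤ hyperbolicForm m u (simpleClass b) := by
  rw [height_simpleReflection, le_add_iff_nonneg_right]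

theorem height_simpleReflection_lt [IsOrderedAddMonoid R] {b : Bool} {u : R × R} :
    height (simpleReflection m b u) < height u ↔ hyperbolicForm m u (simpleClass b) < 0 := by
  rw [height_simpleReflection, add_lt_iff_neg_left]

variable (m) in
/-- The half `x > 0` of the cone of vectors with `B(u, u) > 0`. -/
def positiveCone : Set (R × R) := {u | 0 < hyperbolicForm m u u ∧ 0 < u.1}

variable [IsStrictOrderedRing R]

theorem fst_pos_iff_snd_pos (hm : 0 ≤ m) {u : R × R} (hu : 0 < hyperbolicForm m u u) :
    0 < u.1 ↔ 0 < u.2 := by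
  have hmul : 0 < m * (u.1 * u.2) := by
    rw [hyperbolicForm_apply] at hu
    linarith [mul_self_nonneg u.1, mul_self_nonneg u.2]
  exact pos_iff_pos_of_mul_pos (pos_of_mul_pos_right hmul hm)

theorem snd_pos_of_mem_positiveCone (hm : 0 ≤ m) {u : R × R} (hu : u ∈ positiveCone m) :
    0 < u.2 :=
  (fst_pos_iff_snd_pos hm hu.1).1 hu.2

theorem mapsTo_simpleReflection_positiveCone (hm : 0 ≤ m) (b : Bool) :
    MapsTo (simpleReflection m b) (positiveCone m) (positiveCone m) := by
  intro u hu
  have hform : 0 < hyperbolicForm m (simpleReflection m b u) (simpleReflection m b u) :=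
    hu.1.trans_eq (apply_sphericalReflection_self (isSymm_hyperbolicForm m)
      (hyperbolicForm_simpleClass_self m b) u).symm
  refine ⟨hform, ?_⟩
  cases b with
  | false => rw [simpleReflection_false_fst]; exact hu.2
  | true =>
    rw [fst_pos_iff_snd_pos hm hform, simpleReflection_true_snd]
    exact snd_pos_of_mem_positiveCone hm hu

theorem exists_hyperbolicForm_simpleClass_pos (hm : 0 ≤ m) {u : R × R}
    (hu : u ∈ positiveCone m) : ∃ b, 0 < hyperbolicForm m u (simpleClass b) := by
  by_contra! hneg
  have hself := hyperbolicForm_self m u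
  have hs := mul_nonpos_of_nonneg_of_nonpos hu.2.le (hneg true)
  have ht := mul_nonpos_of_nonneg_of_nonpos (snd_pos_of_mem_positiveCone hm hu).le (hneg false)
  linarith [hu.1]

theorem isDescentHeight_height (hm : 0 ≤ m) :
    IsDescentHeight (fun b ↦ simpleReflection m b) (positiveCone m) height where
  involutive b := involutive_sphericalReflection (hyperbolicForm_simpleClass_self m b)
  mapsTo := mapsTo_simpleReflection_positiveCone hm
  apply_eq_self {u} _ b hb := by
    rw [height_simpleReflection, add_eq_left] at hb
    rw [simpleReflection_apply, hb, zero_smul, add_zero]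
  eq_of_lt {u} hu b c hb hc := by
    rw [height_simpleReflection_lt] at hb hc
    obtain ⟨d, hd⟩ := exists_hyperbolicForm_simpleClass_pos hm hu
    have hbd : b ≠ d := by rintro rfl; exact hb.not_gt hd
    have hcd : c ≠ d := by rintro rfl; exact hc.not_gt hd
    rw [Bool.eq_not_of_ne hbd, Bool.eq_not_of_ne hcd]

end HyperbolicForm

theorem isWF_height_image_positiveCone {m : ℤ} (hm : 0 ≤ m) :
    (height '' positiveCone m).IsWF := by
  refine BddBelow.wellFoundedOn_lt ⟨0, ?_⟩
  rintro _ ⟨u, hu, rfl⟩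
  exact (add_pos hu.2 (snd_pos_of_mem_positiveCone hm hu)).le

/-- Proposition/Definition 6.5 and Proposition 6.7 of
Bayer–Macrì. Fix `m ≥ 3` and equip `ℤ²` with the bilinear form with Gram
matrix `((−2, m), (m, −2))` in the basis `s = (1,0)`, `t = (0,1)`. Consider
the reflections `ρ_s(w) = w + B(w,s)·s` and `ρ_t(w) = w + B(w,t)·t`, and the
group they generate.  Since `ρ_s` and `ρ_t` are involutions, the orbit of a
vector `v` under this group is the set of vectors obtained from `v` by
finitely many applications of `ρ_s` and `ρ_t`.  Then for every `v = (x,y)`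
with `B(v,v) > 0` and `x > 0`, this orbit contains exactly one element `v₀`
with `B(v₀,s) ≥ 0` and `B(v₀,t) ≥ 0` (the minimal class of the orbit). -/
theorem stmt_8 (m : ℤ) (hm : 3 ≤ m)
    (B : ℤ × ℤ → ℤ × ℤ → ℤ)
    (hB : ∀ u w : ℤ × ℤ,
      B u w = -2 * u.1 * w.1 + m * (u.1 * w.2 + u.2 * w.1) - 2 * u.2 * w.2)
    (ρs ρt : ℤ × ℤ → ℤ × ℤ)
    (hρs : ∀ w_ : ℤ × ℤ, ρs w_ = w_ + (B w_ (1, 0)) • ((1 : ℤ), (0 : ℤ)))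
    (hρt : ∀ w_ : ℤ × ℤ, ρt w_ = w_ + (B w_ (0, 1)) • ((0 : ℤ), (1 : ℤ)))
    (v : ℤ × ℤ) (hv : 0 < B v v) (hx : 0 < v.1) :
    ∃! v₀ : ℤ × ℤ,
      (∃ l : List Bool,
        v₀ = l.foldl (fun u b => if b then ρs u else ρt u) v) ∧
      0 ≤ B v₀ (1, 0) ∧ 0 ≤ B v₀ (0, 1) := by
  have hform (u w : ℤ × ℤ) : B u w = hyperbolicForm m u w := by
    rw [hB, hyperbolicForm_apply]
  have hreflection : (fun (u : ℤ × ℤ) (b : Bool) ↦ if b then ρs u else ρt u) =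
      fun u b ↦ simpleReflection m b u := by
    funext u b
    cases b <;> simp [hρs, hρt, hform, simpleReflection_apply, simpleClass]
  have hminimal (w : ℤ × ℤ) : (0 ≤ B w (1, 0) ∧ 0 ≤ B w (0, 1)) ↔
      ∀ b, height w ≤ height (simpleReflection m b w) := by
    simp only [height_le_height_simpleReflection, hform, Bool.forall_bool, simpleClass, and_comm]
  have hm₀ : 0 ≤ m := by linarith
  have hcone : v ∈ positiveCone m := ⟨hform v v ▸ hv, hx⟩
  simp only [hreflection, hminimal]
  exact (isDescentHeight_height hm₀).existsUnique_foldl_forall_le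
    (isWF_height_image_positiveCone hm₀) hcone
end

section
/- Let M = ℤ² be regarded as a lattice in ℝ², and let C ⊆ ℝ² be a convex cone containing no line (i.e. salient: if w ∈ C and w ≠ 0 then −w ∉ C). Let v ∈ M ∩ C be a primitive lattice vector, and suppose v = a + b with a, b ∈ M ∩ C. Then there exist a', b' ∈ M ∩ C with a' + b' = v such that the parallelogram with vertices 0, a', v, b' — i.e. the set {λ·a' + μ·b' : λ, μ ∈ [0,1]} — contains no lattice points of M other than 0, a', v and b'. -/
/-!
Put `d = det(a, b)`; we may assume `d ≥ 0`. If `d > 0`, choose a lattice vector `w` with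
`det(w, v) = 1`, which exists because `v` is primitive. Then `a ∈ d w + ℤ v`, so some translate `p`
of `w` by a multiple of `v` satisfies `d p = a + r v` with `0 ≤ r < d`. Consequently
`d (v - p) = b + (d - 1 - r) v`, so `p` and `v - p` lie in the cone, and they form a lattice basis
because `det(p, v - p) = det(p, v) = 1`. If `d = 0`, then `a` and `b` are multiples of `v` whose
coefficients sum to `1`; one of them is not positive, which forces `0` into the cone, and
`v = 0 + v` is the required decomposition.
-/

section Saturated

variable {M : Type*} [AddCommGroup M]

/-- A subsemigroup of a lattice is saturated if it contains every lattice vector that has a positive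
multiple in it. This is all that is used of a convex cone, apart from closure under addition. -/
def IsSaturatedSemigroup (S : AddSubsemigroup M) : Prop :=
  ∀ (n : ℤ) (x : M), 0 < n → n • x ∈ S → x ∈ S

variable {S : AddSubsemigroup M} {a b p : M} {d r s : ℤ}

lemma add_zsmul_mem_of_nonneg (ha : a ∈ S) (hb : b ∈ S) (hs : 0 ≤ s) : a + s • b ∈ S := by
  induction s, hs using Int.leInduction with
  | base => simpa only [zero_smul, add_zero] using ha
  | succ n _ ih => simpa only [add_smul, one_smul, add_assoc] using add_mem ih hb

lemma zero_mem_of_eq_zsmul_add (ha : a ∈ S) (hb : b ∈ S) (h : a = s • (a + b)) : 0 ∈ S := by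
  have hv : a + b ∈ S := add_mem ha hb
  rcases le_or_gt s 0 with hs | hs
  · have h_zero : a + (-s) • (a + b) = 0 := by rw [neg_smul, ← h, add_neg_cancel]
    exact h_zero ▸ add_zsmul_mem_of_nonneg ha hv (neg_nonneg.2 hs)
  · have h_zero : b + (s - 1) • (a + b) = 0 := by rw [sub_smul, one_smul, ← h]; abel
    exact h_zero ▸ add_zsmul_mem_of_nonneg hb hv (sub_nonneg.2 hs)

lemma IsSaturatedSemigroup.mem_of_zsmul_eq (hS : IsSaturatedSemigroup S) (ha : a ∈ S)
    (hb : b ∈ S) (hd : 0 < d) (hr : 0 ≤ r) (h : d • p = a + r • b) : p ∈ S :=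
  hS d p hd (h ▸ add_zsmul_mem_of_nonneg ha hb hr)

end Saturated

section Determinant

variable {R : Type*} [CommRing R]

/-- The determinant of the `2 × 2` matrix with rows `x` and `y`. -/
def planeDet (x y : R × R) : R := x.1 * y.2 - x.2 * y.1

lemma planeDet_swap (x y : R × R) : planeDet y x = -planeDet x y := by
  simp only [planeDet]; ring

lemma planeDet_add_self (x y : R × R) : planeDet x (x + y) = planeDet x y := by
  simp only [planeDet, Prod.fst_add, Prod.snd_add]; ring

lemma planeDet_add_smul_left (x y : R × R) (c : R) :
    planeDet (x + c • y) y = planeDet x y := by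
  simp only [planeDet, Prod.fst_add, Prod.snd_add, Prod.smul_fst, Prod.smul_snd, smul_eq_mul]; ring

lemma planeDet_smul_add_smul_left (x y : R × R) (c e : R) :
    planeDet (c • x + e • y) y = c * planeDet x y := by
  simp only [planeDet, Prod.fst_add, Prod.snd_add, Prod.smul_fst, Prod.smul_snd, smul_eq_mul]; ring

lemma planeDet_smul_add_smul_right (x y : R × R) (c e : R) :
    planeDet x (c • x + e • y) = e * planeDet x y := by
  simp only [planeDet, Prod.fst_add, Prod.snd_add, Prod.smul_fst, Prod.smul_snd, smul_eq_mul]; ring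

lemma eq_planeDet_smul_add_planeDet_smul {x y : R × R} (h : planeDet x y = 1) (z : R × R) :
    z = planeDet z y • x + planeDet x z • y := by
  simp only [planeDet] at h ⊢
  ext
  · simp only [Prod.fst_add, Prod.smul_fst, smul_eq_mul]
    linear_combination (-z.1) * h
  · simp only [Prod.snd_add, Prod.smul_snd, smul_eq_mul]
    linear_combination (-z.2) * h

lemma exists_planeDet_eq_one {v : R × R} (hv : IsCoprime v.1 v.2) : ∃ w, planeDet w v = 1 := by
  obtain ⟨x, y, hxy⟩ := hv
  exact ⟨(y, -x), by simp only [planeDet]; linear_combination hxy⟩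

end Determinant

lemma isCoprime_of_not_exists_zsmul {v : ℤ × ℤ}
    (hprim : ¬ ∃ (k : ℤ) (w : ℤ × ℤ), 2 ≤ k ∧ v = k • w) : IsCoprime v.1 v.2 := by
  rw [Int.isCoprime_iff_gcd_eq_one]
  by_contra hgcd
  obtain ⟨x, hx⟩ := Int.gcd_dvd_left (a := v.1) (b := v.2)
  obtain ⟨y, hy⟩ := Int.gcd_dvd_right (a := v.1) (b := v.2)
  rcases Nat.eq_zero_or_pos (Int.gcd v.1 v.2) with hzero | hpos
  · obtain ⟨h₁, h₂⟩ := Int.gcd_eq_zero_iff.1 hzero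
    exact hprim ⟨2, 0, le_rfl, by rw [smul_zero]; exact Prod.ext h₁ h₂⟩
  · exact hprim ⟨Int.gcd v.1 v.2, (x, y), by omega, Prod.ext hx hy⟩

section Decomposition

variable {S : AddSubsemigroup (ℤ × ℤ)} {a b : ℤ × ℤ}

lemma zero_mem_of_planeDet_eq_zero (hv : IsCoprime (a + b).1 (a + b).2) (ha : a ∈ S) (hb : b ∈ S)
    (hdet : planeDet a b = 0) : 0 ∈ S := by
  obtain ⟨w, hw⟩ := exists_planeDet_eq_one hv
  have h_multiple : a = planeDet w a • (a + b) := by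
    simpa only [planeDet_add_self, hdet, zero_smul, zero_add]
      using eq_planeDet_smul_add_planeDet_smul hw a
  exact zero_mem_of_eq_zsmul_add ha hb h_multiple

lemma exists_planeDet_eq_one_and_zsmul_eq {v : ℤ × ℤ} (hv : IsCoprime v.1 v.2)
    (hdet : 0 < planeDet a v) :
    ∃ (p : ℤ × ℤ) (r : ℤ), planeDet p v = 1 ∧ 0 ≤ r ∧ r < planeDet a v ∧
      planeDet a v • p = a + r • v := by
  obtain ⟨w, hw⟩ := exists_planeDet_eq_one hv
  set d := planeDet a v
  set k := planeDet w a
  have ha : a = d • w + k • v := eq_planeDet_smul_add_planeDet_smul hw a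
  refine ⟨w + (-(-k / d)) • v, -k % d, by rw [planeDet_add_smul_left, hw],
    Int.emod_nonneg _ hdet.ne', Int.emod_lt_of_pos _ hdet, ?_⟩
  rw [Int.emod_def, ha]
  module

lemma exists_add_eq_and_planeDet_eq_one (hS : IsSaturatedSemigroup S)
    (hv : IsCoprime (a + b).1 (a + b).2) (ha : a ∈ S) (hb : b ∈ S) (hdet : 0 < planeDet a b) :
    ∃ a' ∈ S, ∃ b' ∈ S, a' + b' = a + b ∧ planeDet a' b' = 1 := by
  rw [← planeDet_add_self] at hdet
  obtain ⟨p, r, hp, hr, hrd, h⟩ := exists_planeDet_eq_one_and_zsmul_eq hv hdet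
  set d := planeDet a (a + b)
  have h_compl : d • (a + b - p) = b + (d - 1 - r) • (a + b) := by
    rw [smul_sub, h]; module
  have hab : a + b ∈ S := add_mem ha hb
  refine ⟨p, hS.mem_of_zsmul_eq ha hab hdet hr h,
    a + b - p, hS.mem_of_zsmul_eq hb hab hdet (by omega) h_compl, add_sub_cancel _ _, ?_⟩
  rw [← planeDet_add_self, add_sub_cancel, hp]

end Decomposition

/-- The inclusion of the lattice `ℤ²` into the plane `R²`. -/
def latticeEmbedding (R : Type*) [Ring R] : ℤ × ℤ →+ R × R :=
  (Int.castAddHom R).prodMap (Int.castAddHom R)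

section Parallelogram

variable {K : Type*} [CommRing K] {a b p v : ℤ × ℤ}

lemma planeDet_latticeEmbedding (x y : ℤ × ℤ) :
    planeDet (latticeEmbedding K x) (latticeEmbedding K y) = (planeDet x y : ℤ) := by
  simp [planeDet, latticeEmbedding]

lemma exists_int_coords_of_planeDet_eq_one (hab : planeDet a b = 1) {lam mu : K}
    (hp : latticeEmbedding K p = lam • latticeEmbedding K a + mu • latticeEmbedding K b) :
    ∃ m n : ℤ, lam = m ∧ mu = n ∧ p = m • a + n • b := by
  refine ⟨planeDet p b, planeDet a p, ?_, ?_, eq_planeDet_smul_add_planeDet_smul hab p⟩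
  · rw [← planeDet_latticeEmbedding, hp, planeDet_smul_add_smul_left, planeDet_latticeEmbedding,
      hab, Int.cast_one, mul_one]
  · rw [← planeDet_latticeEmbedding, hp, planeDet_smul_add_smul_right, planeDet_latticeEmbedding,
      hab, Int.cast_one, mul_one]

variable [PartialOrder K]

variable (K) in
/-- The parallelogram spanned by `a` and `b`, taken with coefficients in `K`, contains no lattice
points besides its vertices. It may be degenerate. -/
def IsEmptyParallelogram (a b : ℤ × ℤ) : Prop :=
  ∀ p : ℤ × ℤ,
    (∃ lam mu : K, 0 ≤ lam ∧ lam ≤ 1 ∧ 0 ≤ mu ∧ mu ≤ 1 ∧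
      latticeEmbedding K p = lam • latticeEmbedding K a + mu • latticeEmbedding K b) →
    p = 0 ∨ p = a ∨ p = a + b ∨ p = b

variable [IsStrictOrderedRing K]

lemma int_eq_zero_or_one_of_cast_mem_Icc {n : ℤ} (hn : (n : K) ∈ Set.Icc 0 1) :
    n = 0 ∨ n = 1 := by
  have h_nonneg : 0 ≤ n := by exact_mod_cast hn.1
  have h_le_one : n ≤ 1 := by exact_mod_cast hn.2
  omega

lemma isEmptyParallelogram_of_planeDet_eq_one (hab : planeDet a b = 1) :
    IsEmptyParallelogram K a b := by
  rintro p ⟨lam, mu, hlam₀, hlam₁, hmu₀, hmu₁, hp⟩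
  obtain ⟨m, n, rfl, rfl, rfl⟩ := exists_int_coords_of_planeDet_eq_one hab hp
  rcases int_eq_zero_or_one_of_cast_mem_Icc ⟨hlam₀, hlam₁⟩ with rfl | rfl <;>
    rcases int_eq_zero_or_one_of_cast_mem_Icc ⟨hmu₀, hmu₁⟩ with rfl | rfl <;> simp

lemma isEmptyParallelogram_zero_left (hv : IsCoprime v.1 v.2) : IsEmptyParallelogram K 0 v := by
  rintro p ⟨lam, mu, -, -, hmu₀, hmu₁, hp⟩
  obtain ⟨w, hw⟩ := exists_planeDet_eq_one hv
  have hp' : latticeEmbedding K p = (0 : K) • latticeEmbedding K w + mu • latticeEmbedding K v := by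
    rw [hp, map_zero, smul_zero, zero_smul]
  obtain ⟨m, n, hm, rfl, rfl⟩ := exists_int_coords_of_planeDet_eq_one hw hp'
  obtain rfl : m = 0 := by exact_mod_cast hm.symm
  rcases int_eq_zero_or_one_of_cast_mem_Icc ⟨hmu₀, hmu₁⟩ with rfl | rfl <;> simp

end Parallelogram

section Cone

/-- The semigroup of lattice points of a convex cone in the plane. -/
def latticePoints {K : Type*} [Ring K] [PartialOrder K] (C : ConvexCone K (K × K)) :
    AddSubsemigroup (ℤ × ℤ) where
  carrier := {p | latticeEmbedding K p ∈ C}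
  add_mem' {x y} hx hy := by
    simpa only [Set.mem_ofPred_eq, map_add] using C.add_mem hx hy

variable {K : Type*} [Field K] [LinearOrder K] [IsStrictOrderedRing K]

lemma isSaturatedSemigroup_latticePoints (C : ConvexCone K (K × K)) :
    IsSaturatedSemigroup (latticePoints C) := by
  intro n x hn (hx : latticeEmbedding K (n • x) ∈ C)
  have hn' : (0 : K) < n := by exact_mod_cast hn
  rw [map_zsmul, ← Int.cast_smul_eq_zsmul K] at hx
  exact (C.smul_mem_iff hn').1 hx

theorem stmt_11_general (C : ConvexCone K (K × K)) {v a b : ℤ × ℤ} (hv : IsCoprime v.1 v.2)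
    (ha : a ∈ latticePoints C) (hb : b ∈ latticePoints C) (hab : a + b = v) :
    ∃ a' ∈ latticePoints C, ∃ b' ∈ latticePoints C,
      a' + b' = v ∧ IsEmptyParallelogram K a' b' := by
  wlog hdet : 0 ≤ planeDet a b generalizing a b
  · exact this hb ha (by rw [add_comm, hab]) (by rw [planeDet_swap]; omega)
  subst hab
  rcases hdet.eq_or_lt with hdet | hdet
  · exact ⟨0, zero_mem_of_planeDet_eq_zero hv ha hb hdet.symm, a + b, add_mem ha hb, zero_add _,
      isEmptyParallelogram_zero_left hv⟩
  · obtain ⟨a', ha', b', hb', hsum, hdet'⟩ :=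
      exists_add_eq_and_planeDet_eq_one (isSaturatedSemigroup_latticePoints C) hv ha hb hdet
    exact ⟨a', ha', b', hb', hsum, isEmptyParallelogram_of_planeDet_eq_one hdet'⟩

end Cone

/-- Lemma 9.2 of Bayer–Macrì.
Let `C ⊆ ℝ²` be a convex cone (closed under addition and positive scalar
multiplication) containing no line, and view `ℤ²` as a lattice in `ℝ²` via
`ι (p₁, p₂) = ((p₁ : ℝ), (p₂ : ℝ))`. If a primitive lattice vector
`v ∈ ℤ² ∩ C` can be written as `v = a + b` with `a, b ∈ ℤ² ∩ C`, then it can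
be written as `v = a' + b'` with `a', b' ∈ ℤ² ∩ C` such that the
parallelogram `{λ·a' + μ·b' : λ, μ ∈ [0,1]}` contains no lattice point other
than `0, a', v, b'`. -/
theorem stmt_11 (C : Set (ℝ × ℝ))
    (hadd : ∀ x ∈ C, ∀ y ∈ C, x + y ∈ C)
    (hsmul : ∀ x ∈ C, ∀ t : ℝ, 0 < t → t • x ∈ C)
    (hline : ∀ x ∈ C, x ≠ 0 → -x ∉ C)
    (ι : ℤ × ℤ → ℝ × ℝ) (hι : ∀ p : ℤ × ℤ, ι p = ((p.1 : ℝ), (p.2 : ℝ)))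
    (v : ℤ × ℤ)
    (hprim : ¬ ∃ (k : ℤ) (w : ℤ × ℤ), 2 ≤ k ∧ v = k • w)
    (hv : ι v ∈ C)
    (a b : ℤ × ℤ) (ha : ι a ∈ C) (hb : ι b ∈ C) (hab : a + b = v) :
    ∃ a' b' : ℤ × ℤ, ι a' ∈ C ∧ ι b' ∈ C ∧ a' + b' = v ∧
      ∀ p : ℤ × ℤ,
        (∃ lam mu : ℝ, 0 ≤ lam ∧ lam ≤ 1 ∧ 0 ≤ mu ∧ mu ≤ 1 ∧
          ι p = lam • ι a' + mu • ι b') →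
        p = 0 ∨ p = a' ∨ p = v ∨ p = b' := by
  obtain rfl : ι = latticeEmbedding ℝ := funext hι
  obtain ⟨a', ha', b', hb', rfl, hempty⟩ := stmt_11_general
    ⟨C, fun t ht x hx ↦ hsmul x hx t ht, fun x hx y hy ↦ hadd x hx y hy⟩
    (isCoprime_of_not_exists_zsmul hprim) ha hb hab
  exact ⟨a', b', ha', hb', rfl, hempty⟩
end

section
/- Fix an integer m ≥ 3 and set Q(x,y) = −2x² + 2mxy − 2y². If real numbers x, y satisfy Q(x,y) > 0, Q(x−1, y) < −2 and Q(x, y−1) < −2, then 0 < x < 1 and 0 < y < 1. -/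
/-!
Write `v = x s + y t`, so that `v · t = m x - 2 y`. Then `(v - t)² < -2` means `v² < 2 (v · t)`, so
`v² > 0` makes both pairings `v · s` and `v · t` positive. Their sum is `(m - 2) (x + y)`, while
`v² > 0` forces `x y > 0`; hence `x` and `y` are positive. By symmetry let `x ≤ y`. The identity
`(v - t)² + 2 = 2 ((y - 1) (v · t) + (y² - x²))` has a negative left-hand side, so `y < 1`.
-/

section

variable {R : Type*} [CommRing R]

/-- The self-intersection `v²` of `v = x s + y t` for the symmetric bilinear form with Gram matrix
`((-2, m), (m, -2))` in the basis `s`, `t`, written in the coordinates of `v`. -/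
def selfIntersection (m x y : R) : R :=
  -2 * x ^ 2 + 2 * m * x * y - 2 * y ^ 2

theorem selfIntersection_comm (m x y : R) :
    selfIntersection m x y = selfIntersection m y x := by
  unfold selfIntersection
  ring

theorem selfIntersection_sub_one_right (m x y : R) :
    selfIntersection m x (y - 1) = selfIntersection m x y - 2 * (m * x - 2 * y) - 2 := by
  unfold selfIntersection
  ring

theorem selfIntersection_sub_one_right_add_two (m x y : R) :
    selfIntersection m x (y - 1) + 2 =
      2 * ((y - 1) * (m * x - 2 * y) + (y ^ 2 - x ^ 2)) := by
  unfold selfIntersection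
  ring

variable [LinearOrder R] [IsStrictOrderedRing R] {m x y : R}

theorem mul_pos_of_selfIntersection_pos (hm : -2 ≤ m) (hv : 0 < selfIntersection m x y) :
    0 < x * y := by
  have complete_square :
      selfIntersection m x y = 2 * ((m + 2) * (x * y)) - 2 * (x + y) ^ 2 := by
    unfold selfIntersection
    ring
  have scaled_pos : 0 < (m + 2) * (x * y) := by linarith [sq_nonneg (x + y)]
  exact pos_of_mul_pos_right scaled_pos (by linarith)

theorem two_mul_lt_of_selfIntersection_sub_one_right_lt (hv : 0 ≤ selfIntersection m x y)
    (ht : selfIntersection m x (y - 1) < -2) : 2 * y < m * x := by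
  rw [selfIntersection_sub_one_right] at ht
  linarith

theorem pos_and_pos_of_selfIntersection_sub_one_lt (hm : 2 ≤ m)
    (hv : 0 < selfIntersection m x y) (hs : selfIntersection m (x - 1) y < -2)
    (ht : selfIntersection m x (y - 1) < -2) : 0 < x ∧ 0 < y := by
  have pairing_t : 2 * y < m * x := two_mul_lt_of_selfIntersection_sub_one_right_lt hv.le ht
  have pairing_s : 2 * x < m * y := by
    rw [selfIntersection_comm] at hv hs
    exact two_mul_lt_of_selfIntersection_sub_one_right_lt hv.le hs
  have pairing_sum_pos : 0 < (m - 2) * (x + y) := by linarith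
  have sum_pos : 0 < x + y := pos_of_mul_pos_right pairing_sum_pos (sub_nonneg.mpr hm)
  rcases mul_pos_iff.mp (mul_pos_of_selfIntersection_pos (by linarith) hv) with hpos | ⟨hx, hy⟩
  · exact hpos
  · exact absurd (add_neg hx hy) sum_pos.not_gt

theorem lt_one_of_selfIntersection_sub_one_right_lt (hxy : x ^ 2 ≤ y ^ 2)
    (hv : 0 ≤ selfIntersection m x y) (ht : selfIntersection m x (y - 1) < -2) : y < 1 := by
  have pairing_pos : 0 < m * x - 2 * y :=
    sub_pos.mpr (two_mul_lt_of_selfIntersection_sub_one_right_lt hv ht)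
  have product_neg : (y - 1) * (m * x - 2 * y) < 0 := by
    linarith [selfIntersection_sub_one_right_add_two m x y]
  exact sub_neg.mp (neg_of_mul_neg_left product_neg pairing_pos.le)

theorem stmt_14_general (hm : 2 ≤ m) (hv : 0 < selfIntersection m x y)
    (hs : selfIntersection m (x - 1) y < -2) (ht : selfIntersection m x (y - 1) < -2) :
    (0 < x ∧ x < 1) ∧ (0 < y ∧ y < 1) := by
  wlog hxy : x ≤ y generalizing x y
  · rw [selfIntersection_comm] at hv hs ht
    exact (this hv ht hs (le_of_not_ge hxy)).symm
  obtain ⟨hx, hy⟩ := pos_and_pos_of_selfIntersection_sub_one_lt hm hv hs ht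
  have hy_lt : y < 1 :=
    lt_one_of_selfIntersection_sub_one_right_lt (pow_le_pow_left₀ hx.le hxy 2) hv.le ht
  exact ⟨⟨hx, hxy.trans_lt hy_lt⟩, hy, hy_lt⟩

end

/-- numerical claim in the proof of Proposition 9.4 of
Bayer–Macrì. Fix an integer `m ≥ 3` and set `Q(x,y) = −2x² + 2mxy − 2y²`.
If real numbers `x, y` satisfy `Q(x,y) > 0`, `Q(x−1,y) < −2` and
`Q(x,y−1) < −2`, then `0 < x < 1` and `0 < y < 1`. -/
theorem stmt_14 (m : ℤ) (hm : 3 ≤ m)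
    (Q : ℝ → ℝ → ℝ)
    (hQ : ∀ x y : ℝ, Q x y = -2 * x ^ 2 + 2 * (m : ℝ) * x * y - 2 * y ^ 2)
    (x y : ℝ) (h0 : 0 < Q x y) (h1 : Q (x - 1) y < -2) (h2 : Q x (y - 1) < -2) :
    (0 < x ∧ x < 1) ∧ (0 < y ∧ y < 1) := by
  have hm' : (2 : ℝ) ≤ m := by exact_mod_cast (by lia : (2 : ℤ) ≤ m)
  rw [hQ] at h0 h1 h2
  exact stmt_14_general hm' h0 h1 h2
end
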